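/- Let n ≥ 1, d ≥ 1, q a prime power, A ∈ GL_{n+1}(𝔽_q), and λ ∈ 𝔽_q. If dim_{𝔽_q} P^{A,λ} ≥ binom(d+n, n) − binom(d − ⌊d/2⌋ + n − 1, n) + 1, then A is a diagonal matrix. -/

import Mathlib

/-!
The forms of degree `d` have dimension `binom(d+n, n)`, so it suffices to exhibit, for `A` not
diagonal, a space `W` of degree `d` forms of dimension `binom(m+n, n)`, `m = d - ⌊d/2⌋ - 1`, that
meets `P^{A,λ}` only in zero.

Suppose `A k l ≠ 0` with `k ≠ l`, and write `x = x_k`, `y = x ∘ A`, so that the prime `x` does not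
divide the linear form `y`. Put `a = ⌊d/2⌋ + 1 = d - m > m` and let `W` be the space of multiples
`x ^ a * g` with `g` a form of degree `m`. If `x ^ a * g` lies in `P^{A,λ}` then
`y ^ a * (g ∘ A) = λ x ^ a g`, hence `x ^ a ∣ g ∘ A`. Since `g ∘ A` is zero or a form of degree
`m < a`, it is zero, and so is `g`, because `A` is invertible.
-/

open MvPolynomial

/-- Substitution of variables by the linear forms given by the rows of `A`. -/
noncomputable def substMap {F : Type*} [Field F] {n : ℕ}
    (A : Matrix (Fin (n+1)) (Fin (n+1)) F) :
    MvPolynomial (Fin (n+1)) F →ₗ[F] MvPolynomial (Fin (n+1)) F :=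
  (aeval fun k => ∑ l, A k l • X l).toLinearMap

/-- The subspace `P^{A,λ}` of homogeneous degree `d` polynomials with `λ • f = f ∘ A`. -/
noncomputable def Psub (F : Type*) [Field F] (n d : ℕ)
    (A : Matrix (Fin (n+1)) (Fin (n+1)) F) (lam : F) :
    Submodule F (MvPolynomial (Fin (n+1)) F) :=
  homogeneousSubmodule (Fin (n+1)) F d ⊓
    LinearMap.ker (substMap A - lam • LinearMap.id)

/-- A nonzero homogeneous polynomial is smooth if `f` and its partial derivatives have no
common zero besides the origin over the algebraic closure. -/
def IsSmoothPoly (F : Type*) [Field F] (n : ℕ) (f : MvPolynomial (Fin (n+1)) F) : Prop :=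
  ∀ x : Fin (n+1) → AlgebraicClosure F,
    (aeval x f = 0 ∧ ∀ i, aeval x (pderiv i f) = 0) → x = 0

def SmoothSet (F : Type*) [Field F] (n d : ℕ) : Set (MvPolynomial (Fin (n+1)) F) :=
  {f | f ≠ 0 ∧ f.IsHomogeneous d ∧ IsSmoothPoly F n f}

/-- Nonzero polynomials up to scalar: quotient by the `Fˣ`-scaling action. -/
abbrev HypQuot (F : Type*) [Field F] (n : ℕ) :=
  Quotient (MulAction.orbitRel Fˣ (MvPolynomial (Fin (n+1)) F))

/-- The set `S_{n,d}` of smooth degree `d` hypersurfaces in `ℙⁿ`. -/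
def SND (F : Type*) [Field F] (n d : ℕ) : Set (HypQuot F n) :=
  {X | ∃ f ∈ SmoothSet F n d, Quotient.mk _ f = X}

/-- `PGL_{n+1}(F)`. -/
abbrev PGL (F : Type*) [Field F] (n : ℕ) :=
  GL (Fin (n+1)) F ⧸ Subgroup.center (GL (Fin (n+1)) F)

/-- The automorphisms over `F` of the hypersurface cut out by `f`: classes `[A]` in `PGL`
such that `f ∘ A = λ • f` for some scalar `λ ∈ Fˣ`. -/
def AutSetPoly (F : Type*) [Field F] (n : ℕ) (f : MvPolynomial (Fin (n+1)) F) :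
    Set (PGL F n) :=
  {a | ∃ A : GL (Fin (n+1)) F, QuotientGroup.mk A = a ∧
    ∃ c : Fˣ, substMap (A : Matrix (Fin (n+1)) (Fin (n+1)) F) f = (c : F) • f}

/-- The automorphism group of a hypersurface class. -/
def AutClass (F : Type*) [Field F] (n : ℕ) (X : HypQuot F n) : Set (PGL F n) :=
  {a | ∃ f, Quotient.mk _ f = X ∧ a ∈ AutSetPoly F n f}

/-- Stars and bars: the forms of degree `d` in `n + 1` variables have dimension
`binom(d + n, n)`. -/
lemma finrank_homogeneousSubmodule_fin (F : Type) [Field F] (n d : ℕ) :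
    Module.finrank F (homogeneousSubmodule (Fin (n+1)) F d) = (d + n).choose n := by
  rw [homogeneousSubmodule_eq_finsupp_supported]
  rw [(AddMonoidAlgebra.supportedEquivFinsupp (R := F) (S := F)
    {s : Fin (n+1) →₀ ℕ | s.degree = d}).finrank_eq]
  have e : {s : Fin (n+1) →₀ ℕ | s.degree = d} ≃ Sym (Fin (n+1)) d :=
    (Equiv.subtypeEquivRight fun s => by
      simp [Finsupp.degree_eq_sum, Finsupp.sum_fintype]).trans (Sym.equivNatSum (Fin (n+1)) d).symm
  have : Fintype {s : Fin (n+1) →₀ ℕ | s.degree = d} := Fintype.ofEquiv _ e.symm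
  rw [Module.finrank_finsupp_self, Fintype.card_congr e, Sym.card_sym_eq_choose]
  rw [Fintype.card_fin, show n + 1 + d - 1 = d + n by omega]
  exact Nat.choose_symm_add

lemma substMap_mul {F : Type*} [Field F] {n : ℕ} (A : Matrix (Fin (n+1)) (Fin (n+1)) F)
    (f g : MvPolynomial (Fin (n+1)) F) :
    substMap A (f * g) = substMap A f * substMap A g := by
  simp [substMap]

lemma substMap_X_pow {F : Type*} [Field F] {n : ℕ} (A : Matrix (Fin (n+1)) (Fin (n+1)) F)
    (k : Fin (n+1)) (a : ℕ) : substMap A (X k ^ a) = (∑ l, A k l • X l) ^ a := by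
  simp [substMap]

lemma isHomogeneous_substMap {F : Type*} [Field F] {n m : ℕ}
    (A : Matrix (Fin (n+1)) (Fin (n+1)) F) {f : MvPolynomial (Fin (n+1)) F}
    (hf : f.IsHomogeneous m) : (substMap A f).IsHomogeneous m := by
  have := hf.aeval (R := F) (fun k => ∑ l, A k l • (X l : MvPolynomial (Fin (n+1)) F)) (n := 1)
    (fun k => IsHomogeneous.sum _ _ _ fun l _ => by
      rw [smul_eq_C_mul]; exact isHomogeneous_C_mul_X _ _)
  simpa [substMap] using this

lemma substMap_injective {F : Type*} [Field F] {n : ℕ} (A : GL (Fin (n+1)) F) :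
    Function.Injective (substMap (A : Matrix (Fin (n+1)) (Fin (n+1)) F)) := by
  -- Substituting by `A` and then by `A⁻¹` is the identity.
  have key : ((aeval fun k => ∑ l, (↑A⁻¹ : Matrix (Fin (n+1)) (Fin (n+1)) F) k l •
        (X l : MvPolynomial (Fin (n+1)) F)).comp
      (aeval fun k => ∑ l, (A : Matrix (Fin (n+1)) (Fin (n+1)) F) k l •
        (X l : MvPolynomial (Fin (n+1)) F))) = AlgHom.id F _ := by
    ext1 k
    have hA : (A : Matrix (Fin (n+1)) (Fin (n+1)) F) * (↑A⁻¹ : Matrix _ _ F) = 1 :=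
      A.mul_inv
    simp only [AlgHom.comp_apply, aeval_X, map_sum, map_smul, AlgHom.id_apply, Finset.smul_sum,
      smul_smul]
    rw [Finset.sum_comm]
    simp_rw [← Finset.sum_smul, ← Matrix.mul_apply, hA, Matrix.one_apply]
    simp
  intro f g hfg
  have hfg' := congrArg (aeval fun k => ∑ l, (↑A⁻¹ : Matrix (Fin (n+1)) (Fin (n+1)) F) k l •
        (X l : MvPolynomial (Fin (n+1)) F)) hfg
  have hf := DFunLike.congr_fun key f
  have hg := DFunLike.congr_fun key g
  exact hf.symm.trans (hfg'.trans hg)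

lemma not_X_dvd_linear {F : Type*} [Field F] {n : ℕ} (c : Fin (n+1) → F) {k l : Fin (n+1)}
    (hkl : k ≠ l) (hc : c l ≠ 0) :
    ¬ (X k : MvPolynomial (Fin (n+1)) F) ∣ ∑ j, c j • X j := by
  rintro ⟨g, hg⟩
  have h := congrArg (coeff (Finsupp.single l 1)) hg
  rw [coeff_X_mul', if_neg (by simpa using hkl)] at h
  apply hc
  simpa [coeff_sum, coeff_smul, coeff_X, Finsupp.single_left_inj] using h

/-- With `a > m` and `y = x_k ∘ A` not divisible by `x_k`: from `y ^ a * (g ∘ A) = λ x_k ^ a g` the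
prime power `x_k ^ a` divides the degree `m` form `g ∘ A`, which is therefore zero. -/
lemma disjoint_Psub_multiples {F : Type} [Field F] {n d m a : ℕ} (A : GL (Fin (n+1)) F) (lam : F)
    {k l : Fin (n+1)} (hkl : k ≠ l) (hA : (A : Matrix (Fin (n+1)) (Fin (n+1)) F) k l ≠ 0)
    (hma : m < a) :
    Disjoint (Psub F n d (A : Matrix (Fin (n+1)) (Fin (n+1)) F) lam)
      ((homogeneousSubmodule (Fin (n+1)) F m).map (LinearMap.mulLeft F (X k ^ a))) := by
  rw [Submodule.disjoint_def]
  rintro f hf ⟨g, hg, rfl⟩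
  have hf2 := LinearMap.mem_ker.mp hf.2
  simp only [LinearMap.sub_apply, LinearMap.smul_apply, LinearMap.id_apply,
    LinearMap.mulLeft_apply, sub_eq_zero, substMap_mul, substMap_X_pow] at hf2
  have hdvd : X k ^ a ∣ substMap (A : Matrix (Fin (n+1)) (Fin (n+1)) F) g := by
    refine Prime.pow_dvd_of_dvd_mul_left X_prime a (a := (∑ j, A k j • X j) ^ a)
      (fun h => not_X_dvd_linear _ hkl hA (X_prime.dvd_of_dvd_pow h)) ?_
    rw [hf2]
    rw [← mul_smul_comm]
    exact dvd_mul_right _ _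
  have hz : substMap (A : Matrix (Fin (n+1)) (Fin (n+1)) F) g = 0 := by
    by_contra hne
    have hdeg := (isHomogeneous_substMap (A : Matrix (Fin (n+1)) (Fin (n+1)) F) hg).totalDegree hne
    obtain ⟨q, hq⟩ := hdvd
    have hq0 : q ≠ 0 := by rintro rfl; simp [hq] at hne
    rw [hq, totalDegree_mul_of_isDomain (pow_ne_zero _ (X_ne_zero k)) hq0, totalDegree_X_pow]
      at hdeg
    omega
  have : g = 0 := substMap_injective A (by rw [hz, map_zero])
  simp [this]

/-- If `dim P^{A,λ} ≥ binom(d+n,n) - binom(d - ⌊d/2⌋ + n - 1, n) + 1`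
then `A` is a diagonal matrix. -/
theorem diagonal_of_large_dim_Psub (n d : ℕ) (hn : 1 ≤ n) (hd : 1 ≤ d)
    (F : Type) [Field F] [Fintype F]
    (A : GL (Fin (n+1)) F) (lam : F)
    (h : (d + n).choose n - (d - d / 2 + n - 1).choose n + 1 ≤
      Module.finrank F (Psub F n d (A : Matrix (Fin (n+1)) (Fin (n+1)) F) lam)) :
    (A : Matrix (Fin (n+1)) (Fin (n+1)) F).IsDiag := by
  intro k l hkl
  by_contra hA
  obtain ⟨m, hm⟩ : ∃ m, d = m + (d / 2 + 1) := ⟨d - d / 2 - 1, by omega⟩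
  set P := Psub F n d (A : Matrix (Fin (n+1)) (Fin (n+1)) F) lam with hP
  set W := (homogeneousSubmodule (Fin (n+1)) F m).map (LinearMap.mulLeft F (X k ^ (d / 2 + 1)))
    with hW
  have hdis : Disjoint P W := disjoint_Psub_multiples A lam hkl hA (by omega)
  have hWdim : Module.finrank F W = (m + n).choose n := by
    rw [← finrank_homogeneousSubmodule_fin F n m]
    have hinj : Function.Injective (LinearMap.mulLeft F
        ((X k : MvPolynomial (Fin (n+1)) F) ^ (d / 2 + 1))) :=
      mul_right_injective₀ (pow_ne_zero _ (X_ne_zero k))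
    exact (Submodule.equivMapOfInjective _ hinj _).finrank_eq.symm
  have hPle : P ≤ homogeneousSubmodule (Fin (n+1)) F d := inf_le_left
  have hWle : W ≤ homogeneousSubmodule (Fin (n+1)) F d := by
    rintro _ ⟨g, hg, rfl⟩
    have := (isHomogeneous_X_pow (R := F) k (d / 2 + 1)).mul hg
    rw [show d / 2 + 1 + m = d by omega] at this
    exact this
  have : FiniteDimensional F (homogeneousSubmodule (Fin (n+1)) F d) :=
    Module.Finite.iff_fg.mpr (homogeneousSubmodule_fg _ _ d)
  have : FiniteDimensional F P := Submodule.finiteDimensional_of_le hPle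
  have : FiniteDimensional F W := Submodule.finiteDimensional_of_le hWle
  have hsum := Submodule.finrank_sup_add_finrank_inf_eq P W
  have hle := Submodule.finrank_mono (sup_le hPle hWle)
  rw [hdis.eq_bot, finrank_bot] at hsum
  rw [finrank_homogeneousSubmodule_fin] at hle
  rw [show d - d / 2 + n - 1 = m + n by omega] at h
  omega
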